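/- In the regime switching model, suppose all distributions P_a equal a common distribution P = (p_k)_{k≥1} with counting function ν. Then for any n ≥ 1, 0 ≤ r ≤ n−1, and ε ∈ [0,1]: P{𝓛_n = r} ≤ Σ_{m=r}^n C_{r,m}(ε) P{L_n = m}, where C_{r,r} = Σ_{k≥1} p_k^{1+r}, and for r+1 ≤ m ≤ n, C_{r,m}(ε) = c(r)ν(ε)/m + 2^{1+r} C(m,r) ∫_0^ε u^r ν(u/2) (1 − u/2)^{m−r} du, with c(0) = e^{−1} and c(r) = e(1+r)/√π for r ≥ 1. -/

import Mathlib

open MeasureTheory ENNReal Finset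

/-- The constant `c(r)`: `c(0) = e⁻¹` and `c(r) = e(1+r)/√π` for `r ≥ 1`. -/
noncomputable def cDGP (r : ℕ) : ℝ≥0∞ :=
  if r = 0 then ENNReal.ofReal (Real.exp (-1))
  else ENNReal.ofReal (Real.exp 1 * (1 + r) / Real.sqrt Real.pi)

open scoped Classical in
/-- The counting function `ν(ε) = Σ_k 1{p_k ≥ ε}` of a distribution `q` on `ℕ`. -/
noncomputable def nuCount1 (q : ℕ → ℝ≥0∞) (ε : ℝ) : ℝ≥0∞ :=
  ∑' k, if ENNReal.ofReal ε ≤ q k then 1 else 0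

/-!
Conditionally on the alphabets, the symbols are i.i.d. with law `q`, so among the `m = L_n` earlier
times sharing the last alphabet the number of repetitions of the last symbol `k` is binomial with
parameters `m` and `q k`. Hence `P{𝓛_n = r}` is the mixture of
`∑ₖ C(m, r) q(k)^(r+1) (1 - q(k))^(m-r)` over the law of `L_n`, and it remains to bound this sum.
Terms with `q k ≥ ε` are at most `c(r) / m`: for `r = 0` by `y e^(-y) ≤ e⁻¹`, and for `r ≥ 1`
because `(m + 1) C(m, r) = (r + 1) C(m + 1, r + 1)`, a binomial probability is at most `1`, and
`√π ≤ e`. Terms with `x = q k < ε` are bounded by writing `x^(r+1) = (r + 1) ∫₀ˣ u^r du` and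
using `r + 1 ≤ 2^(r+1)` and `u / 2 ≤ x`.
-/

section ProductWeights

variable {B ι : Type*}

lemma tsum_fin_succ_pi (n : ℕ) (f : (Fin (n + 1) → B) → ℝ≥0∞) :
    ∑' x, f x = ∑' (b : B) (y : Fin n → B), f (Fin.snoc (α := fun _ => B) y b) := by
  rw [← (Fin.snocEquiv fun _ : Fin (n + 1) => B).tsum_eq f, ENNReal.tsum_prod']
  rfl

lemma tsum_fin_pi_prod (n : ℕ) (f : Fin n → B → ℝ≥0∞) :
    ∑' x : Fin n → B, ∏ i, f i (x i) = ∏ i, ∑' b, f i b := by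
  induction n with
  | zero => simp
  | succ n ih =>
    rw [tsum_fin_succ_pi, Fin.prod_univ_castSucc, ← ih]
    simp only [Fin.prod_univ_castSucc, Fin.snoc_castSucc, Fin.snoc_last]
    simp_rw [ENNReal.tsum_mul_right, ENNReal.tsum_mul_left]

lemma tsum_pi_prod [Fintype ι] (f : ι → B → ℝ≥0∞) :
    ∑' x : ι → B, ∏ i, f i (x i) = ∏ i, ∑' b, f i b := by
  let e := (Fintype.equivFin ι).symm
  calc ∑' x : ι → B, ∏ i, f i (x i)
      = ∑' x : ι → B, ∏ j, f (e j) (x (e j)) :=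
        tsum_congr fun x => (e.prod_comp fun i => f i (x i)).symm
    _ = ∑' y : Fin (Fintype.card ι) → B, ∏ j, f (e j) (y j) :=
        (e.symm.arrowCongr (Equiv.refl B)).tsum_eq fun y => ∏ j, f (e j) (y j)
    _ = ∏ i, ∑' b, f i b := by
        rw [tsum_fin_pi_prod, e.prod_comp fun i => ∑' b, f i b]

lemma tsum_ite_filter_eq [Fintype ι] [DecidableEq ι] {q : B → ℝ≥0∞} (hq : ∑' b, q b = 1)
    (p : B → Prop) [DecidablePred p] {S J : Finset ι} (hSJ : S ⊆ J) :
    ∑' x : ι → B, (if {i ∈ J | p (x i)} = S then ∏ i, q (x i) else 0) =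
      (∑' b, if p b then q b else 0) ^ #S * (∑' b, if p b then 0 else q b) ^ (#J - #S) := by
  let f (i : ι) (b : B) : ℝ≥0∞ :=
    if i ∈ J then if i ∈ S then if p b then q b else 0 else if p b then 0 else q b else q b
  have integrand_eq_prod (x : ι → B) :
      (if {i ∈ J | p (x i)} = S then ∏ i, q (x i) else 0) = ∏ i, f i (x i) := by
    split_ifs with h
    · refine prod_congr rfl fun i _ => ?_
      simp only [f, ← h, mem_filter]
      grind
    · obtain ⟨i, hiJ, hi⟩ : ∃ i ∈ J, ¬(i ∈ S ↔ p (x i)) := by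
        by_contra! hall
        exact h (by grind)
      refine (prod_eq_zero (mem_univ i) ?_).symm
      grind
  have tsum_factor (i : ι) : ∑' b, f i b =
      if i ∈ J then if i ∈ S then ∑' b, if p b then q b else 0 else ∑' b, if p b then 0 else q b
      else 1 := by
    simp only [f]
    split_ifs
    exacts [rfl, rfl, hq]
  simp_rw [integrand_eq_prod, tsum_pi_prod, tsum_factor]
  rw [prod_ite_mem, univ_inter, prod_ite, prod_const, prod_const, filter_mem_eq_inter,
    inter_eq_right.2 hSJ, filter_notMem_eq_sdiff, card_sdiff_of_subset hSJ]

lemma tsum_ite_card_filter_eq [Fintype ι] {q : B → ℝ≥0∞} (hq : ∑' b, q b = 1)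
    (p : B → Prop) [DecidablePred p] (J : Finset ι) (r : ℕ) :
    ∑' x : ι → B, (if #{i ∈ J | p (x i)} = r then ∏ i, q (x i) else 0) =
      (#J).choose r *
        ((∑' b, if p b then q b else 0) ^ r * (∑' b, if p b then 0 else q b) ^ (#J - r)) := by
  classical
  have sum_over_subsets (x : ι → B) :
      (if #{i ∈ J | p (x i)} = r then ∏ i, q (x i) else 0) =
        ∑ S ∈ J.powersetCard r, if {i ∈ J | p (x i)} = S then ∏ i, q (x i) else 0 := by
    simp [sum_ite_eq, mem_powersetCard, filter_subset]
  simp_rw [sum_over_subsets]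
  rw [Summable.tsum_finsetSum fun _ _ => ENNReal.summable, ← card_powersetCard, ← nsmul_eq_mul]
  refine sum_eq_card_nsmul fun S hS => ?_
  obtain ⟨hSJ, rfl⟩ := mem_powersetCard.1 hS
  exact tsum_ite_filter_eq hq p hSJ

lemma tsum_ite_eq_one_sub [DecidableEq B] {q : B → ℝ≥0∞} (hq : ∑' b, q b = 1) (c : B) :
    ∑' b, (if b = c then 0 else q b) = 1 - q c := by
  have hc : q c ≠ ∞ := ne_top_of_le_ne_top one_ne_top (hq ▸ ENNReal.le_tsum c)
  rw [← hq, ENNReal.tsum_eq_add_tsum_ite (f := q) c, ENNReal.add_sub_cancel_left hc]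
  congr!

end ProductWeights

section RepeatProbability

variable {K : Type*}

open scoped Classical in
/-- The counting function `ν` of a distribution on an arbitrary type of symbols; `nuCount1` is the
case of symbols in `ℕ`. -/
noncomputable def countingFunction (q : K → ℝ≥0∞) (ε : ℝ) : ℝ≥0∞ :=
  ∑' k, if ENNReal.ofReal ε ≤ q k then 1 else 0

/-- The probability that, among `m + 1` independent symbols of law `q`, the last one occurs exactly
`r` times among the first `m`. -/
noncomputable def repeatProb (q : K → ℝ≥0∞) (m r : ℕ) : ℝ≥0∞ :=
  ∑' k, m.choose r * (q k ^ (r + 1) * (1 - q k) ^ (m - r))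

lemma repeatProb_eq_zero_of_lt (q : K → ℝ≥0∞) {m r : ℕ} (hmr : m < r) : repeatProb q m r = 0 := by
  simp [repeatProb, Nat.choose_eq_zero_of_lt hmr]

lemma repeatProb_self (q : K → ℝ≥0∞) (r : ℕ) : repeatProb q r r = ∑' k, q k ^ (r + 1) := by
  simp [repeatProb]

lemma choose_mul_pow_mul_one_sub_pow_le_one {x : ℝ≥0∞} (hx : x ≤ 1) (n k : ℕ) :
    n.choose k * (x ^ k * (1 - x) ^ (n - k)) ≤ 1 := by
  rcases lt_or_ge n k with hnk | hkn
  · simp [Nat.choose_eq_zero_of_lt hnk]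
  calc n.choose k * (x ^ k * (1 - x) ^ (n - k))
      = x ^ k * (1 - x) ^ (n - k) * n.choose k := mul_comm _ _
    _ ≤ ∑ j ∈ range (n + 1), x ^ j * (1 - x) ^ (n - j) * n.choose j :=
        single_le_sum (f := fun j => x ^ j * (1 - x) ^ (n - j) * (n.choose j : ℝ≥0∞))
          (fun _ _ => zero_le) (mem_range_succ_iff.2 hkn)
    _ = 1 := by rw [← add_pow, add_tsub_cancel_of_le hx, one_pow]

lemma mul_choose_mul_pow_le {x : ℝ≥0∞} (hx : x ≤ 1) (m r : ℕ) :
    m * (m.choose r * (x ^ (r + 1) * (1 - x) ^ (m - r))) ≤ r + 1 := by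
  have absorption : ((m : ℝ≥0∞) + 1) * m.choose r = (m + 1).choose (r + 1) * (r + 1) := by
    exact_mod_cast Nat.add_one_mul_choose_eq m r
  calc m * (m.choose r * (x ^ (r + 1) * (1 - x) ^ (m - r)))
      ≤ (m + 1) * (m.choose r * (x ^ (r + 1) * (1 - x) ^ (m - r))) := by
        gcongr
        exact le_self_add
    _ = (r + 1) * ((m + 1).choose (r + 1) * (x ^ (r + 1) * (1 - x) ^ (m + 1 - (r + 1)))) := by
        rw [← mul_assoc, absorption, Nat.add_sub_add_right]
        ring
    _ ≤ r + 1 := mul_le_of_le_one_right' (choose_mul_pow_mul_one_sub_pow_le_one hx _ _)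

lemma mul_mul_one_sub_pow_le_exp_neg_one {t : ℝ} (ht0 : 0 ≤ t) (ht1 : t ≤ 1) (m : ℕ) :
    m * (t * (1 - t) ^ m) ≤ Real.exp (-1) := by
  calc m * (t * (1 - t) ^ m)
      ≤ m * (t * Real.exp (-t) ^ m) := by
        have : 0 ≤ 1 - t := sub_nonneg.2 ht1
        gcongr
        exact Real.one_sub_le_exp_neg t
    _ = m * t * Real.exp (-(m * t)) := by
        rw [← Real.exp_nat_mul, mul_neg, mul_assoc]
    _ ≤ Real.exp (-1) := Real.mul_exp_neg_le_exp_neg_one _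

lemma add_one_le_cDGP {r : ℕ} (hr : r ≠ 0) : r + 1 ≤ cDGP r := by
  have sqrt_pi_le_exp_one : √Real.pi ≤ Real.exp 1 := by
    have : √Real.pi ≤ 2 := (Real.sqrt_le_left zero_le_two).2 (by linarith [Real.pi_le_four])
    linarith [Real.add_one_le_exp 1]
  rw [cDGP, if_neg hr, ENNReal.le_ofReal_iff_toReal_le (by finiteness) (by positivity),
    le_div_iff₀ (by positivity)]
  calc ((r : ℝ≥0∞) + 1).toReal * √Real.pi
      = (1 + r) * √Real.pi := by
        rw [ENNReal.toReal_add (by finiteness) one_ne_top, ENNReal.toReal_natCast,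
          ENNReal.toReal_one, add_comm]
    _ ≤ (1 + r) * Real.exp 1 := by gcongr
    _ = Real.exp 1 * (1 + r) := mul_comm _ _

lemma choose_mul_pow_le_cDGP_div {x : ℝ≥0∞} (hx : x ≤ 1) {m : ℕ} (hm : m ≠ 0) (r : ℕ) :
    m.choose r * (x ^ (r + 1) * (1 - x) ^ (m - r)) ≤ cDGP r / m := by
  rw [ENNReal.le_div_iff_mul_le (.inl (mod_cast hm)) (.inl (natCast_ne_top m)), mul_comm]
  rcases eq_or_ne r 0 with rfl | hr0
  · obtain ⟨t, ht0, rfl⟩ : ∃ t : ℝ, 0 ≤ t ∧ x = ENNReal.ofReal t :=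
      ⟨x.toReal, toReal_nonneg, (ENNReal.ofReal_toReal (ne_top_of_le_ne_top one_ne_top hx)).symm⟩
    have ht1 : t ≤ 1 := ENNReal.ofReal_le_one.1 hx
    have real_bound :=
      ENNReal.ofReal_le_ofReal (mul_mul_one_sub_pow_le_exp_neg_one ht0 ht1 m)
    rw [ENNReal.ofReal_mul m.cast_nonneg, ENNReal.ofReal_mul ht0,
      ENNReal.ofReal_pow (sub_nonneg.2 ht1), ENNReal.ofReal_sub _ ht0] at real_bound
    simpa [cDGP] using real_bound
  · exact (mul_choose_mul_pow_le hx m r).trans (add_one_le_cDGP hr0)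

lemma lintegral_Ioc_ofReal_pow (r : ℕ) (t : ℝ) :
    ∫⁻ u in Set.Ioc 0 t, ENNReal.ofReal u ^ r = ENNReal.ofReal t ^ (r + 1) / (r + 1) := by
  rcases lt_or_ge t 0 with ht | ht
  · simp [Set.Ioc_eq_empty_of_le ht.le, ENNReal.ofReal_of_nonpos ht.le]
  calc ∫⁻ u in Set.Ioc 0 t, ENNReal.ofReal u ^ r
      = ∫⁻ u in Set.Ioc 0 t, ENNReal.ofReal (u ^ r) :=
        setLIntegral_congr_fun measurableSet_Ioc fun u hu => (ENNReal.ofReal_pow hu.1.le r).symm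
    _ = ENNReal.ofReal (∫ u in 0..t, u ^ r) := by
        rw [intervalIntegral.integral_of_le ht, ofReal_integral_eq_lintegral_ofReal]
        · exact ((continuous_pow r).intervalIntegrable 0 t).1
        · filter_upwards [ae_restrict_mem measurableSet_Ioc] with u hu using pow_nonneg hu.1.le r
    _ = ENNReal.ofReal (t ^ (r + 1) / (r + 1 : ℕ)) := by simp [integral_pow]
    _ = ENNReal.ofReal t ^ (r + 1) / (r + 1) := by
        rw [ENNReal.ofReal_div_of_pos (by positivity), ENNReal.ofReal_pow ht,
          ENNReal.ofReal_natCast, Nat.cast_add_one]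

lemma ofReal_pow_succ_le_lintegral (r : ℕ) (t : ℝ) :
    ENNReal.ofReal t ^ (r + 1) ≤ 2 ^ (r + 1) * ∫⁻ u in Set.Ioc 0 t, ENNReal.ofReal u ^ r := by
  have add_one_le_two_pow : (r : ℝ≥0∞) + 1 ≤ 2 ^ (r + 1) := by
    exact_mod_cast (Nat.lt_two_pow_self (n := r + 1)).le
  calc ENNReal.ofReal t ^ (r + 1)
      = (r + 1) * (ENNReal.ofReal t ^ (r + 1) / (r + 1)) :=
        (ENNReal.mul_div_cancel (by simp) (by finiteness)).symm
    _ ≤ 2 ^ (r + 1) * ∫⁻ u in Set.Ioc 0 t, ENNReal.ofReal u ^ r := by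
        rw [lintegral_Ioc_ofReal_pow]
        gcongr

open scoped Classical in
lemma pow_mul_one_sub_pow_le_lintegral {x : ℝ≥0∞} {ε : ℝ} (hx : x < ENNReal.ofReal ε) (r s : ℕ) :
    x ^ (r + 1) * (1 - x) ^ s ≤
      2 ^ (r + 1) * ∫⁻ u in Set.Ioc 0 ε,
        ENNReal.ofReal u ^ r * (if ENNReal.ofReal (u / 2) ≤ x then 1 else 0) *
          ENNReal.ofReal (1 - u / 2) ^ s := by
  obtain ⟨t, ht, rfl⟩ : ∃ t : ℝ, 0 ≤ t ∧ x = ENNReal.ofReal t :=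
    ⟨x.toReal, toReal_nonneg, (ENNReal.ofReal_toReal hx.ne_top).symm⟩
  have hε : t < ε := (ENNReal.ofReal_lt_ofReal_iff_of_nonneg ht).1 hx
  calc ENNReal.ofReal t ^ (r + 1) * (1 - ENNReal.ofReal t) ^ s
      ≤ 2 ^ (r + 1) * (∫⁻ u in Set.Ioc 0 t, ENNReal.ofReal u ^ r) *
          (1 - ENNReal.ofReal t) ^ s := by
        gcongr
        exact ofReal_pow_succ_le_lintegral r t
    _ = 2 ^ (r + 1) *
          ∫⁻ u in Set.Ioc 0 t, ENNReal.ofReal u ^ r * (1 - ENNReal.ofReal t) ^ s := by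
        rw [mul_assoc, lintegral_mul_const' _ _ (by finiteness)]
    _ ≤ 2 ^ (r + 1) * ∫⁻ u in Set.Ioc 0 t,
          ENNReal.ofReal u ^ r * (if ENNReal.ofReal (u / 2) ≤ ENNReal.ofReal t then 1 else 0) *
            ENNReal.ofReal (1 - u / 2) ^ s := by
        gcongr 2 ^ (r + 1) * ?_
        refine setLIntegral_mono' measurableSet_Ioc fun u hu => ?_
        rw [if_pos (ENNReal.ofReal_le_ofReal (by linarith [hu.1, hu.2])), mul_one,
          ← ENNReal.ofReal_one, ← ENNReal.ofReal_sub _ ht]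
        gcongr
        linarith [hu.1, hu.2]
    _ ≤ _ := by gcongr

open scoped Classical in
lemma choose_mul_pow_le_cDGP_add_lintegral {x : ℝ≥0∞} (hx : x ≤ 1) {m : ℕ} (hm : m ≠ 0)
    (r : ℕ) (ε : ℝ) :
    m.choose r * (x ^ (r + 1) * (1 - x) ^ (m - r)) ≤
      cDGP r * (if ENNReal.ofReal ε ≤ x then 1 else 0) / m +
        2 ^ (r + 1) * m.choose r * ∫⁻ u in Set.Ioc 0 ε,
          ENNReal.ofReal u ^ r * (if ENNReal.ofReal (u / 2) ≤ x then 1 else 0) *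
            ENNReal.ofReal (1 - u / 2) ^ (m - r) := by
  rcases le_or_gt (ENNReal.ofReal ε) x with hεx | hxε
  · rw [if_pos hεx, mul_one]
    exact (choose_mul_pow_le_cDGP_div hx hm r).trans le_self_add
  · refine le_add_left ?_
    rw [mul_comm (2 ^ (r + 1)), mul_assoc]
    exact mul_le_mul_right (pow_mul_one_sub_pow_le_lintegral hxε r (m - r)) _

open scoped Classical in
lemma tsum_lintegral_eq_lintegral_countingFunction [Countable K] (q : K → ℝ≥0∞) (ε : ℝ)
    (r s : ℕ) :
    ∑' k, ∫⁻ u in Set.Ioc 0 ε,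
        ENNReal.ofReal u ^ r * (if ENNReal.ofReal (u / 2) ≤ q k then 1 else 0) *
          ENNReal.ofReal (1 - u / 2) ^ s =
      ∫⁻ u in Set.Ioc 0 ε,
        ENNReal.ofReal u ^ r * countingFunction q (u / 2) * ENNReal.ofReal (1 - u / 2) ^ s := by
  rw [← lintegral_tsum]
  · simp only [countingFunction, ENNReal.tsum_mul_right, ENNReal.tsum_mul_left]
  · intro k
    have measurable_indicator :
        Measurable fun u : ℝ => if ENNReal.ofReal (u / 2) ≤ q k then (1 : ℝ≥0∞) else 0 :=
      .ite (measurableSet_le (by fun_prop) measurable_const) measurable_const measurable_const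
    fun_prop

lemma repeatProb_le [Countable K] {q : K → ℝ≥0∞} (hq : ∀ k, q k ≤ 1) {m : ℕ} (hm : m ≠ 0)
    (r : ℕ) (ε : ℝ) :
    repeatProb q m r ≤
      cDGP r * countingFunction q ε / m +
        2 ^ (r + 1) * m.choose r * ∫⁻ u in Set.Ioc 0 ε,
          ENNReal.ofReal u ^ r * countingFunction q (u / 2) *
            ENNReal.ofReal (1 - u / 2) ^ (m - r) := by
  classical
  refine (ENNReal.tsum_le_tsum fun k =>
    choose_mul_pow_le_cDGP_add_lintegral (hq k) hm r ε).trans_eq ?_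
  rw [ENNReal.tsum_add, ENNReal.tsum_mul_left, tsum_lintegral_eq_lintegral_countingFunction]
  simp only [countingFunction, div_eq_mul_inv _ (m : ℝ≥0∞), ENNReal.tsum_mul_right,
    ENNReal.tsum_mul_left]

end RepeatProbability

section Recurrence

variable {A B K : Type*} [DecidableEq A] [DecidableEq B] [DecidableEq K] {n : ℕ}

/-- The recurrence count `L_n` of a sequence: how many of the terms `0, …, n - 1` equal term `n`.
Applied to `Z_n = (X_n, K_n)` instead of `X_n` it is `𝓛_n`. -/
def recurrenceCount (x : ℕ → B) (n : ℕ) : ℕ :=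
  ∑ i ∈ range n, if x i = x n then 1 else 0

/-- The earlier times at which a tuple takes its last value. -/
def recurrenceTimes (x : Fin (n + 1) → B) : Finset (Fin n) :=
  {i | x i.castSucc = x (Fin.last n)}

lemma recurrenceCount_eq_card_recurrenceTimes (x : ℕ → B) (n : ℕ) :
    recurrenceCount x n = #(recurrenceTimes fun i : Fin (n + 1) => x i) := by
  simp only [recurrenceCount, recurrenceTimes, card_filter, sum_range, Fin.val_castSucc,
    Fin.val_last]

lemma recurrenceTimes_prodMk (a : Fin (n + 1) → A) (k : Fin (n + 1) → K) :
    recurrenceTimes (fun i => (a i, k i)) = recurrenceTimes a ∩ recurrenceTimes k := by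
  ext i
  simp [recurrenceTimes]

lemma tsum_ite_card_inter_recurrenceTimes {q : K → ℝ≥0∞} (hq : ∑' k, q k = 1)
    (J : Finset (Fin n)) (r : ℕ) :
    ∑' k : Fin (n + 1) → K, (if #(J ∩ recurrenceTimes k) = r then ∏ i, q (k i) else 0) =
      repeatProb q #J r := by
  rw [tsum_fin_succ_pi, repeatProb]
  refine tsum_congr fun c => ?_
  have inter_snoc (y : Fin n → K) :
      J ∩ recurrenceTimes (Fin.snoc (α := fun _ => K) y c) = {i ∈ J | y i = c} := by
    ext i
    simp [recurrenceTimes]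
  calc _ = ∑' y : Fin n → K, (if #{i ∈ J | y i = c} = r then ∏ i, q (y i) else 0) * q c := by
        refine tsum_congr fun y => ?_
        simp only [inter_snoc, Fin.prod_univ_castSucc, Fin.snoc_castSucc, Fin.snoc_last, ite_mul,
          zero_mul]
    _ = _ := by
        rw [ENNReal.tsum_mul_right, tsum_ite_card_filter_eq hq (· = c), tsum_ite_eq,
          tsum_ite_eq_one_sub hq]
        ring

end Recurrence

lemma measure_preimage_eq_tsum_of_tsum_fibers {Ω X : Type*} [MeasurableSpace Ω] [Countable X]
    (P : Measure Ω) [IsFiniteMeasure P] (τ : Ω → X)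
    (hτ : ∑' x, P (τ ⁻¹' {x}) = P Set.univ) (S : Set X) :
    P (τ ⁻¹' S) = ∑' x : S, P (τ ⁻¹' {x.1}) := by
  have measure_le (T : Set X) : P (τ ⁻¹' T) ≤ ∑' x : T, P (τ ⁻¹' {x.1}) := by
    rw [← Set.biUnion_preimage_singleton]
    exact measure_biUnion_le P T.to_countable _
  have tsum_add_compl :
      ∑' x : S, P (τ ⁻¹' {x.1}) + ∑' x : ↥Sᶜ, P (τ ⁻¹' {x.1}) = P Set.univ :=
    (ENNReal.summable.tsum_add_tsum_compl ENNReal.summable).trans hτ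
  have compl_ne_top : ∑' x : ↥Sᶜ, P (τ ⁻¹' {x.1}) ≠ ∞ :=
    ne_top_of_le_ne_top (measure_ne_top P _) (tsum_add_compl ▸ le_add_self)
  -- Both bounds on the complementary fibers add up to the total mass, so neither can be strict.
  refine (measure_le S).antisymm ((ENNReal.add_le_add_iff_right compl_ne_top).1 ?_)
  calc _ = P (τ ⁻¹' S ∪ τ ⁻¹' Sᶜ) := by
        rw [tsum_add_compl, ← Set.preimage_union, Set.union_compl_self, Set.preimage_univ]
    _ ≤ P (τ ⁻¹' S) + P (τ ⁻¹' Sᶜ) := measure_union_le _ _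
    _ ≤ _ := by gcongr; exact measure_le Sᶜ

section RegimeWeight

variable {A : Type*} {R : ℕ → (ℕ → A) → A → ℝ≥0∞} {n : ℕ}

/-- The probability that the first `n` alphabets are `a`, where `R i a` is the conditional law of
alphabet `i` given the past of `a`. The transition rules take infinite sequences, so `a` is padded
by the arbitrary alphabet `a₀`. -/
noncomputable def regimeWeight (R : ℕ → (ℕ → A) → A → ℝ≥0∞) (a₀ : A) (a : Fin n → A) : ℝ≥0∞ :=
  ∏ i : Fin n, R i (Function.extend Fin.val a fun _ => a₀) (a i)

lemma regimeWeight_snoc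
    (hRdep : ∀ (i : ℕ) (a a' : ℕ → A), (∀ j < i, a j = a' j) → R i a = R i a')
    (a₀ : A) (a : Fin n → A) (b : A) :
    regimeWeight R a₀ (Fin.snoc (α := fun _ => A) a b) =
      regimeWeight R a₀ a * R n (Function.extend Fin.val a fun _ => a₀) b := by
  have extend_snoc_eq (j : ℕ) (hj : j < n) :
      Function.extend Fin.val (Fin.snoc (α := fun _ => A) a b) (fun _ => a₀) j =
        Function.extend Fin.val a (fun _ => a₀) j := by
    refine (Fin.val_injective.extend_apply _ _ (Fin.castSucc ⟨j, hj⟩)).trans ?_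
    exact (Fin.snoc_castSucc ..).trans (Fin.val_injective.extend_apply a _ ⟨j, hj⟩).symm
  rw [regimeWeight, Fin.prod_univ_castSucc, Fin.snoc_last, Fin.val_last,
    hRdep n _ _ extend_snoc_eq, regimeWeight]
  congr 1
  refine prod_congr rfl fun i _ => ?_
  rw [Fin.snoc_castSucc, Fin.val_castSucc,
    hRdep i _ _ fun j hj => extend_snoc_eq j (hj.trans i.isLt)]

lemma tsum_regimeWeight
    (hRdep : ∀ (i : ℕ) (a a' : ℕ → A), (∀ j < i, a j = a' j) → R i a = R i a')
    (hRsum : ∀ (i : ℕ) (a : ℕ → A), ∑' b, R i a b = 1) (a₀ : A) (n : ℕ) :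
    ∑' a : Fin n → A, regimeWeight R a₀ a = 1 := by
  induction n with
  | zero => simp [regimeWeight]
  | succ n ih =>
    rw [tsum_fin_succ_pi, ENNReal.tsum_comm]
    simp only [regimeWeight_snoc hRdep, ENNReal.tsum_mul_left, hRsum, mul_one, ih]

end RegimeWeight

/-- The regime switching model up to time `n` with the same symbol law `q` in every alphabet: `R` is
the conditional law of the next alphabet given the past ones, and the symbols are drawn
independently of each other and of the alphabets. The maps `Z i` need not be measurable, so
`P` is only prescribed on cylinders. -/
structure IsRegimeSwitching {A K Ω : Type*} [MeasurableSpace Ω] (P : Measure Ω)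
    (Z : ℕ → Ω → A × K) (R : ℕ → (ℕ → A) → A → ℝ≥0∞) (q : K → ℝ≥0∞) (n : ℕ) : Prop where
  tsum_symbol : ∑' k, q k = 1
  transition_congr : ∀ (i : ℕ) (a a' : ℕ → A), (∀ j < i, a j = a' j) → R i a = R i a'
  tsum_transition : ∀ (i : ℕ) (a : ℕ → A), ∑' b, R i a b = 1
  measure_cylinder : ∀ (a : ℕ → A) (k : ℕ → K),
    P (⋂ i ∈ range (n + 1), {ω | Z i ω = (a i, k i)}) =
      (∏ i ∈ range (n + 1), R i a (a i)) * ∏ i ∈ range (n + 1), q (k i)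

/-- The alphabets and the symbols observed up to time `n`. -/
def trajectory {A K Ω : Type*} (Z : ℕ → Ω → A × K) (n : ℕ) (ω : Ω) :
    (Fin (n + 1) → A) × (Fin (n + 1) → K) :=
  (fun i => (Z i ω).1, fun i => (Z i ω).2)

namespace IsRegimeSwitching

variable {A K Ω : Type*} [MeasurableSpace Ω] {P : Measure Ω} {Z : ℕ → Ω → A × K}
  {R : ℕ → (ℕ → A) → A → ℝ≥0∞} {q : K → ℝ≥0∞} {n : ℕ}

lemma measure_trajectory_preimage_singleton (h : IsRegimeSwitching P Z R q n) (a₀ : A)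
    (a : Fin (n + 1) → A) (k : Fin (n + 1) → K) :
    P (trajectory Z n ⁻¹' {(a, k)}) = regimeWeight R a₀ a * ∏ i, q (k i) := by
  have fiber_eq_cylinder : trajectory Z n ⁻¹' {(a, k)} = ⋂ i ∈ range (n + 1),
      {ω | Z i ω = (Function.extend Fin.val a (fun _ => a₀) i,
        Function.extend Fin.val k (fun _ => k 0) i)} := by
    ext ω
    simp only [Set.mem_iInter, mem_range, Set.mem_ofPred_eq]
    rw [← Fin.forall_iff (p := fun i => Z i ω = (Function.extend Fin.val a (fun _ => a₀) i,
      Function.extend Fin.val k (fun _ => k 0) i))]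
    simp [trajectory, Prod.ext_iff, funext_iff, forall_and, Fin.val_injective.extend_apply]
  rw [fiber_eq_cylinder, h.measure_cylinder, prod_range, prod_range]
  simp only [Fin.val_injective.extend_apply, regimeWeight]

open scoped Classical in
lemma measure_trajectory_preimage [Countable A] [Countable K] [IsProbabilityMeasure P]
    (h : IsRegimeSwitching P Z R q n) (a₀ : A)
    (S : Set ((Fin (n + 1) → A) × (Fin (n + 1) → K))) :
    P (trajectory Z n ⁻¹' S) =
      ∑' a, regimeWeight R a₀ a * ∑' k, if (a, k) ∈ S then ∏ i, q (k i) else 0 := by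
  have tsum_symbols : ∑' k : Fin (n + 1) → K, ∏ i, q (k i) = 1 := by
    rw [tsum_pi_prod fun _ => q]
    simp [h.tsum_symbol]
  have tsum_fibers : ∑' x, P (trajectory Z n ⁻¹' {x}) = P Set.univ := by
    rw [ENNReal.tsum_prod', measure_univ]
    simp only [h.measure_trajectory_preimage_singleton a₀, ENNReal.tsum_mul_left, tsum_symbols,
      mul_one, tsum_regimeWeight h.transition_congr h.tsum_transition]
  rw [measure_preimage_eq_tsum_of_tsum_fibers P _ tsum_fibers,
    tsum_subtype S fun x => P (trajectory Z n ⁻¹' {x}), ENNReal.tsum_prod']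
  simp only [Set.indicator_apply, h.measure_trajectory_preimage_singleton a₀,
    ← ENNReal.tsum_mul_left, mul_ite, mul_zero]

variable [Countable A] [DecidableEq A] [Countable K] [IsProbabilityMeasure P]

lemma measure_recurrenceCount_alphabet (h : IsRegimeSwitching P Z R q n) (a₀ : A) (m : ℕ) :
    P {ω | recurrenceCount (fun i => (Z i ω).1) n = m} =
      ∑' a : Fin (n + 1) → A, if #(recurrenceTimes a) = m then regimeWeight R a₀ a else 0 := by
  classical
  simp only [recurrenceCount_eq_card_recurrenceTimes]
  refine (h.measure_trajectory_preimage a₀ {x | #(recurrenceTimes x.1) = m}).trans ?_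
  refine tsum_congr fun a => ?_
  by_cases ha : #(recurrenceTimes a) = m <;> simp [ha, tsum_pi_prod fun _ => q, h.tsum_symbol]

lemma measure_recurrenceCount [DecidableEq K] (h : IsRegimeSwitching P Z R q n) (a₀ : A) (r : ℕ) :
    P {ω | recurrenceCount (fun i => Z i ω) n = r} =
      ∑' a : Fin (n + 1) → A, regimeWeight R a₀ a * repeatProb q #(recurrenceTimes a) r := by
  simp only [recurrenceCount_eq_card_recurrenceTimes]
  have event_eq : {ω | #(recurrenceTimes fun i : Fin (n + 1) => Z i ω) = r} =
      trajectory Z n ⁻¹' {x | #(recurrenceTimes x.1 ∩ recurrenceTimes x.2) = r} := by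
    ext ω
    simp only [trajectory, Set.mem_preimage, Set.mem_ofPred_eq, ← recurrenceTimes_prodMk]
  rw [event_eq, h.measure_trajectory_preimage a₀]
  refine tsum_congr fun a => congrArg _ ?_
  rw [← tsum_ite_card_inter_recurrenceTimes h.tsum_symbol]
  congr!

theorem measure_recurrenceCount_eq_sum [DecidableEq K] (h : IsRegimeSwitching P Z R q n) (r : ℕ) :
    P {ω | recurrenceCount (fun i => Z i ω) n = r} =
      ∑ m ∈ Icc r n,
        repeatProb q m r * P {ω | recurrenceCount (fun i => (Z i ω).1) n = m} := by
  obtain ⟨ω⟩ : Nonempty Ω := P.nonempty_of_neZero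
  let a₀ : A := (Z 0 ω).1
  simp_rw [h.measure_recurrenceCount a₀, h.measure_recurrenceCount_alphabet a₀,
    ← ENNReal.tsum_mul_left]
  rw [← Summable.tsum_finsetSum fun _ _ => ENNReal.summable]
  refine tsum_congr fun a => ?_
  have card_le : #(recurrenceTimes a) ≤ n := card_le_univ _ |>.trans_eq (Fintype.card_fin n)
  simp only [mul_ite, mul_zero, sum_ite_eq, mem_Icc, card_le, and_true]
  split_ifs with hr
  · exact mul_comm _ _
  · rw [repeatProb_eq_zero_of_lt q (not_le.1 hr), mul_zero]

end IsRegimeSwitching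

theorem regime_switching_same_alphabet_bound_general {A K Ω : Type*} [Countable A] [DecidableEq A]
    [Countable K] [DecidableEq K] [MeasurableSpace Ω] {P : Measure Ω} [IsProbabilityMeasure P]
    {Z : ℕ → Ω → A × K} {R : ℕ → (ℕ → A) → A → ℝ≥0∞} {q : K → ℝ≥0∞} {n : ℕ}
    (h : IsRegimeSwitching P Z R q n) (r : ℕ) (ε : ℝ) :
    P {ω | recurrenceCount (fun i => Z i ω) n = r} ≤
      ∑ m ∈ Icc r n,
        (if m = r then ∑' k, q k ^ (r + 1)
         else cDGP r * countingFunction q ε / m +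
           2 ^ (r + 1) * m.choose r * ∫⁻ u in Set.Ioc 0 ε,
             ENNReal.ofReal u ^ r * countingFunction q (u / 2) *
               ENNReal.ofReal (1 - u / 2) ^ (m - r)) *
          P {ω | recurrenceCount (fun i => (Z i ω).1) n = m} := by
  have q_le_one (k : K) : q k ≤ 1 := h.tsum_symbol ▸ ENNReal.le_tsum k
  rw [h.measure_recurrenceCount_eq_sum]
  refine sum_le_sum fun m hm => mul_le_mul_left ?_ _
  split_ifs with hmr
  · rw [hmr, repeatProb_self]
  · have hm0 : m ≠ 0 := by grind
    exact repeatProb_le q_le_one hm0 r ε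

/-- Example 4.1: in the regime switching model with all within-alphabet
distributions equal to one distribution `P = (p_k)` with counting function `ν`, for
`n ≥ 1`, `0 ≤ r ≤ n−1` and `ε ∈ [0,1]`:
`P{𝓛_n = r} ≤ Σ_{m=r}^n C_{r,m}(ε) P{L_n = m}`, where `C_{r,r} = Σ_k p_k^{1+r}` and,
for `r+1 ≤ m ≤ n`, `C_{r,m}(ε) = c(r)ν(ε)/m + 2^{1+r} binom(m,r) ∫_0^ε u^r ν(u/2)(1−u/2)^{m−r} du`. -/
theorem regime_switching_same_alphabet_bound {A : Type*} [Countable A] [DecidableEq A]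
    {Ω : Type*} [MeasurableSpace Ω] (P : Measure Ω) [IsProbabilityMeasure P]
    (Z : ℕ → Ω → A × ℕ)
    (q : ℕ → ℝ≥0∞) (hq : ∑' k, q k = 1)
    (p : A → ℕ → ℝ≥0∞) (hpq : ∀ a, p a = q)
    (R : ℕ → (ℕ → A) → A → ℝ≥0∞)
    (hRdep : ∀ (n : ℕ) (a a' : ℕ → A), (∀ i < n, a i = a' i) → R n a = R n a')
    (hRsum : ∀ (n : ℕ) (a : ℕ → A), ∑' b, R n a b = 1)
    (hZ : ∀ (n : ℕ) (a : ℕ → A) (k : ℕ → ℕ),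
      P (⋂ i ∈ Finset.range (n + 1), {ω | Z i ω = (a i, k i)}) =
        (∏ i ∈ Finset.range (n + 1), R i a (a i)) *
          ∏ i ∈ Finset.range (n + 1), p (a i) (k i))
    (n r : ℕ) (hn : 1 ≤ n) (hr : r ≤ n - 1) (ε : ℝ) (hε : ε ∈ Set.Icc (0 : ℝ) 1) :
    P {ω | (∑ i ∈ Finset.range n, if Z i ω = Z n ω then 1 else 0 : ℕ) = r} ≤
      ∑ m ∈ Finset.Icc r n,
        (if m = r then ∑' k, q k ^ (r + 1)
         else cDGP r * nuCount1 q ε / (m : ℝ≥0∞) +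
           2 ^ (r + 1) * (m.choose r : ℝ≥0∞) *
             ∫⁻ u in Set.Ioc (0 : ℝ) ε,
               ENNReal.ofReal u ^ r * nuCount1 q (u / 2) *
                 ENNReal.ofReal (1 - u / 2) ^ (m - r)) *
          P {ω | (∑ i ∈ Finset.range n, if (Z i ω).1 = (Z n ω).1 then 1 else 0 : ℕ) = m} := by
  obtain rfl : p = fun _ => q := funext hpq
  exact regime_switching_same_alphabet_bound_general ⟨hq, hRdep, hRsum, hZ n⟩ r ε
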